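/- Let κ be an inaccessible cardinal and λ a cardinal. For every closed unbounded set C ⊆ κ and every set S ⊆ λ with |S| ≤ κ, the set {p⃗ ∈ Sacks(κ,λ) : for all ξ ∈ S, C(p⃗(ξ)) ⊆ C} is dense in Sacks(κ,λ). -/

import Mathlib

open Set Cardinal

noncomputable section

/-- A node of the binary tree `2^{<κ}`: a binary sequence of ordinal length `len < κ`,
coded as a function on all ordinals that takes the value `false` from `len` onwards. -/
structure BNode (κ : Cardinal.{0}) : Type 1 where
  len : Ordinal.{0}
  len_lt : len < κ.ord
  val : Ordinal.{0} → Bool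
  val_false : ∀ i, len ≤ i → val i = false

namespace BNode

variable {κ : Cardinal.{0}}

/-- `s.Ext t` means that `t` extends `s`, i.e. `s ⊆ t` as partial functions
(`s` is an initial segment of `t`). -/
def Ext (s t : BNode κ) : Prop :=
  s.len ≤ t.len ∧ ∀ i, i < s.len → t.val i = s.val i

/-- `s.snoc b` is the concatenation `s⌢b`.  (When `κ` is an infinite cardinal the
`dite` always takes the first branch, since `κ.ord` is a limit ordinal.) -/
def snoc (s : BNode κ) (b : Bool) : BNode κ :=
  if h : s.len + 1 < κ.ord then
    { len := s.len + 1
      len_lt := h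
      val := fun i => if i < s.len then s.val i else if i = s.len then b else false
      val_false := by
        intro i hi
        have h1 : s.len < i :=
          lt_of_lt_of_le (by rw [Ordinal.add_one_eq_succ]; exact Order.lt_succ _) hi
        simp [not_lt_of_gt h1, h1.ne'] }
  else s

end BNode

/-- `C` is a closed unbounded subset of the ordinal `L`. -/
def IsClubIn (L : Ordinal.{0}) (C : Set Ordinal.{0}) : Prop :=
  (∀ c ∈ C, c < L) ∧
  (∀ o, o < L → o ≠ 0 → (∀ i, i < o → ∃ c ∈ C, i < c ∧ c < o) → o ∈ C) ∧
  (∀ i, i < L → ∃ c ∈ C, i < c)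

/-- `s` splits in `p`: both `s⌢0` and `s⌢1` belong to `p`. -/
def Splits {κ : Cardinal.{0}} (p : Set (BNode κ)) (s : BNode κ) : Prop :=
  s.snoc false ∈ p ∧ s.snoc true ∈ p

/-- `C` is a splitting club for `p`: a closed unbounded subset of `κ` such that a node
`s ∈ p` splits in `p` if and only if `length s ∈ C`. -/
def IsSplitClub {κ : Cardinal.{0}} (p : Set (BNode κ)) (C : Set Ordinal.{0}) : Prop :=
  IsClubIn κ.ord C ∧ ∀ s ∈ p, (Splits p s ↔ s.len ∈ C)

/-- `p ⊆ 2^{<κ}` is a perfect `κ`-tree: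
(1) closed under initial segments;
(2) closed under unions of `⊆`-increasing chains of length `< κ` (the union being the
unique node `u` extending every member of the chain and whose length is the supremum
of the lengths);
(3) every node has a splitting extension;
(4) there is a club `C ⊆ κ` such that a node of `p` splits iff its length lies in `C`. -/
def IsPerfectTree {κ : Cardinal.{0}} (p : Set (BNode κ)) : Prop :=
  (∀ t ∈ p, ∀ s : BNode κ, s.Ext t → s ∈ p) ∧
  (∀ η : Ordinal.{0}, η < κ.ord → ∀ f : Ordinal.{0} → BNode κ,
      (∀ α β, α < β → β < η → (f α).Ext (f β)) →
      (∀ α, α < η → f α ∈ p) →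
      ∀ u : BNode κ, (∀ α, α < η → (f α).Ext u) →
        (∀ i, i < u.len → ∃ α, α < η ∧ i < (f α).len) → u ∈ p) ∧
  (∀ s ∈ p, ∃ t ∈ p, s.Ext t ∧ Splits p t) ∧
  (∃ C : Set Ordinal.{0}, IsSplitClub p C)

/-- The canonical splitting club of `p`: the set of lengths of splitting nodes of `p`.
For a perfect `κ`-tree (with `κ` inaccessible) this coincides with the unique
splitting club `C(p)`. -/
def splitClub {κ : Cardinal.{0}} (p : Set (BNode κ)) : Set Ordinal.{0} :=
  {o | ∃ s ∈ p, s.len = o ∧ Splits p s}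

/-- `Split_i(p)`: the nodes of `p` whose length is the `i`-th element of the increasing
enumeration of the splitting club of `p`. -/
def SplitLev {κ : Cardinal.{0}} (p : Set (BNode κ)) (i : Ordinal.{0}) : Set (BNode κ) :=
  {s ∈ p | s.len = Ordinal.enumOrd (splitClub p) i}

/-- The thinning `p↾s = {t ∈ p : s ⊆ t or t ⊆ s}`. -/
def thinTree {κ : Cardinal.{0}} (p : Set (BNode κ)) (s : BNode κ) : Set (BNode κ) :=
  {t ∈ p | s.Ext t ∨ t.Ext s}

/-- A condition in `Sacks(κ,λ)`: a `λ`-indexed family of perfect `κ`-trees (coded as a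
function on all ordinals which is the full tree `2^{<κ}` off `λ`) whose support
(the set of coordinates where it is not the full tree) has cardinality at most `κ`. -/
def SacksCond (κ lam : Cardinal.{0}) (p : Ordinal.{0} → Set (BNode κ)) : Prop :=
  (∀ α, α < lam.ord → IsPerfectTree (p α)) ∧
  (∀ α, ¬ α < lam.ord → p α = Set.univ) ∧
  #{α : Ordinal.{0} | α < lam.ord ∧ p α ≠ Set.univ} ≤ Cardinal.lift.{1} κ

/-- The (coordinatewise) order on `Sacks(κ,λ)`. -/
def SacksLe {κ : Cardinal.{0}} (lam : Cardinal.{0}) (p q : Ordinal.{0} → Set (BNode κ)) : Prop :=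
  ∀ α, α < lam.ord → p α ⊆ q α

/-- The forcing `Sacks(κ,λ)` as a partial order. -/
def SacksProd (κ lam : Cardinal.{0}) : Type 1 :=
  {p : Ordinal.{0} → Set (BNode κ) // SacksCond κ lam p}

instance SacksProd.instPartialOrder (κ lam : Cardinal.{0}) : PartialOrder (SacksProd κ lam) where
  le p q := ∀ α, p.1 α ⊆ q.1 α
  le_refl p α := subset_rfl
  le_trans p q r h1 h2 α := (h1 α).trans (h2 α)
  le_antisymm p q h1 h2 := Subtype.ext (funext fun α => subset_antisymm (h1 α) (h2 α))

/-- A partial order is almost homogeneous if for any `p, q` there is an order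
automorphism `f` such that `f p` and `q` are compatible. -/
def AlmostHomogeneous (P : Type*) [Preorder P] : Prop :=
  ∀ p q : P, ∃ f : P ≃o P, ∃ r : P, r ≤ f p ∧ r ≤ q

/-- A condition in the Cohen forcing `Add(γ,λ)`: a partial function from `λ × γ` to `2`
(coded as a functional set of triples) of cardinality less than `γ`. -/
def CohenCond (γ lam : Cardinal.{0}) (s : Set (Ordinal.{0} × Ordinal.{0} × Bool)) : Prop :=
  (∀ x ∈ s, x.1 < lam.ord ∧ x.2.1 < γ.ord) ∧
  (∀ a b u v, (a, b, u) ∈ s → (a, b, v) ∈ s → u = v) ∧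
  #s < Cardinal.lift.{1} γ

/-- The Cohen forcing `Add(γ,λ)`, ordered by reverse inclusion. -/
def CohenPoset (γ lam : Cardinal.{0}) : Type 1 := {s // CohenCond γ lam s}

instance CohenPoset.instPartialOrder (γ lam : Cardinal.{0}) : PartialOrder (CohenPoset γ lam) where
  le p q := q.1 ⊆ p.1
  le_refl p := subset_rfl
  le_trans p q r h1 h2 := Set.Subset.trans h2 h1
  le_antisymm p q h1 h2 := Subtype.ext (subset_antisymm h2 h1)

/-- `q` is an `(S,a)`-thinning of `p`: on each coordinate `ξ ∈ S`, the tree `p ξ` is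
thinned below some node on its `a`-th splitting level, and `q` agrees with `p` off `S`. -/
def IsThinning {κ : Cardinal.{0}} (S : Set Ordinal.{0}) (a : Ordinal.{0})
    (p q : Ordinal.{0} → Set (BNode κ)) : Prop :=
  (∀ ξ, ξ ∉ S → q ξ = p ξ) ∧
  ∀ ξ ∈ S, ∃ s ∈ SplitLev (p ξ) a, q ξ = thinTree (p ξ) s

/-- `p` reduces `D`: for some `S ⊆ λ` of size `< κ` and some `a < κ`, every
`(S,a)`-thinning of `p` belongs to `D`. -/
def ReducesDense (κ lam : Cardinal.{0}) (p : SacksProd κ lam)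
    (D : Set (SacksProd κ lam)) : Prop :=
  ∃ S : Set Ordinal.{0}, S ⊆ Set.Iio lam.ord ∧ #S < Cardinal.lift.{1} κ ∧
    ∃ a : Ordinal.{0}, a < κ.ord ∧
      ∀ q : SacksProd κ lam, IsThinning S a p.1 q.1 → q ∈ D

namespace BNode

variable {κ : Cardinal.{0}}

theorem ext_of_len_val {s t : BNode κ} (hl : s.len = t.len)
    (hv : ∀ i, i < s.len → s.val i = t.val i) : s = t := by
  have hval : s.val = t.val := by
    funext i
    rcases lt_or_ge i s.len with h | h
    · exact hv i h
    · rw [s.val_false i h, t.val_false i (hl ▸ h)]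
  cases s
  cases t
  simp only at hl hval
  subst hl hval
  rfl

/-- The node of length `δ` given by the restriction of `v` to `δ`. -/
def restrict (v : Ordinal.{0} → Bool) (δ : Ordinal.{0}) (hδ : δ < κ.ord) : BNode κ where
  len := δ
  len_lt := hδ
  val i := if i < δ then v i else false
  val_false _ hi := if_neg hi.not_gt

theorem restrict_val_of_lt {v : Ordinal.{0} → Bool} {δ : Ordinal.{0}} (hδ : δ < κ.ord)
    {i : Ordinal.{0}} (hi : i < δ) : (restrict v δ hδ).val i = v i := if_pos hi

theorem restrict_ext_restrict (v : Ordinal.{0} → Bool) {γ δ : Ordinal.{0}} (hγ : γ < κ.ord)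
    (hδ : δ < κ.ord) (h : γ ≤ δ) : (restrict v γ hγ).Ext (restrict v δ hδ) := by
  refine ⟨h, fun i hi => ?_⟩
  exact (restrict_val_of_lt hδ (lt_of_lt_of_le hi h)).trans (restrict_val_of_lt hγ hi).symm

theorem len_add_one_lt (hκ : ℵ₀ ≤ κ) (s : BNode κ) : s.len + 1 < κ.ord := by
  rw [← Order.succ_eq_add_one]
  exact (isSuccLimit_ord hκ).succ_lt s.len_lt

theorem snoc_len (hκ : ℵ₀ ≤ κ) (s : BNode κ) (b : Bool) : (s.snoc b).len = s.len + 1 := by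
  rw [snoc, dif_pos (len_add_one_lt hκ s)]

theorem snoc_val_of_lt (hκ : ℵ₀ ≤ κ) (s : BNode κ) (b : Bool) {i : Ordinal.{0}} (hi : i < s.len) :
    (s.snoc b).val i = s.val i := by
  rw [snoc, dif_pos (len_add_one_lt hκ s)]
  exact if_pos hi

theorem snoc_val_len (hκ : ℵ₀ ≤ κ) (s : BNode κ) (b : Bool) : (s.snoc b).val s.len = b := by
  rw [snoc, dif_pos (len_add_one_lt hκ s)]
  simp

/-- A proper extension of `s` extends one of the two immediate successors of `s`. -/
theorem snoc_ext_of_ext (hκ : ℵ₀ ≤ κ) {s t : BNode κ} (h : s.Ext t) (hlt : s.len < t.len) :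
    (s.snoc (t.val s.len)).Ext t := by
  refine ⟨by rw [snoc_len hκ]; exact Order.add_one_le_of_lt hlt, fun i hi => ?_⟩
  rw [snoc_len hκ] at hi
  rcases (Order.lt_add_one_iff.1 hi).lt_or_eq with hi | rfl
  · rw [snoc_val_of_lt hκ s _ hi, h.2 i hi]
  · rw [snoc_val_len hκ]

end BNode

section ClubIntersection

theorem exists_mem_inter_of_isClubIn {L : Ordinal.{0}} (hL : ℵ₀ < L.cof)
    {C D : Set Ordinal.{0}} (hC : IsClubIn L C) (hD : IsClubIn L D) {i : Ordinal.{0}}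
    (hi : i < L) : ∃ c ∈ C ∩ D, i < c := by
  choose! f hfC hf using hC.2.2
  choose! g hgD hg using hD.2.2
  let h : ℕ → Ordinal.{0} := fun n => (fun x => g (f x))^[n] i
  have hsucc : ∀ n, h (n + 1) = g (f (h n)) := fun n => Function.iterate_succ_apply' _ _ _
  have hlt : ∀ n, h n < L := by
    intro n
    induction n with
    | zero => exact hi
    | succ n ih => rw [hsucc]; exact hD.1 _ (hgD _ (hC.1 _ (hfC _ ih)))
  have hfL : ∀ n, f (h n) < L := fun n => hC.1 _ (hfC _ (hlt n))
  have hfh : ∀ n, f (h n) < h (n + 1) := fun n => by rw [hsucc]; exact hg _ (hfL n)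
  have hsup : ⨆ n, h n < L := Ordinal.iSup_lt_of_lt_cof (by simpa using hL) hlt
  have hle : ∀ n, h n ≤ ⨆ n, h n := fun n => Ordinal.le_iSup h n
  have hlt' : ∀ n, h n < ⨆ n, h n := fun n =>
    ((hf _ (hlt n)).trans (hfh n)).trans_le (hle (n + 1))
  have hne : ⨆ n, h n ≠ 0 := (pos_of_gt (hlt' 0)).ne'
  refine ⟨⨆ n, h n, ⟨hC.2.1 _ hsup hne fun j hj => ?_, hD.2.1 _ hsup hne fun j hj => ?_⟩, hlt' 0⟩
  · obtain ⟨n, hn⟩ := Ordinal.lt_iSup_iff.1 hj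
    exact ⟨f (h n), hfC _ (hlt n), hn.trans (hf _ (hlt n)), (hfh n).trans_le (hle _)⟩
  · obtain ⟨n, hn⟩ := Ordinal.lt_iSup_iff.1 hj
    refine ⟨h (n + 1), ?_, hn.trans ((hf _ (hlt n)).trans (hfh n)), hlt' _⟩
    rw [hsucc]
    exact hgD _ (hfL n)

theorem IsClubIn.inter {L : Ordinal.{0}} (hL : ℵ₀ < L.cof) {C D : Set Ordinal.{0}}
    (hC : IsClubIn L C) (hD : IsClubIn L D) : IsClubIn L (C ∩ D) := by
  refine ⟨fun c hc => hC.1 c hc.1, fun o ho ho0 h => ⟨hC.2.1 o ho ho0 fun i hi => ?_,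
    hD.2.1 o ho ho0 fun i hi => ?_⟩, fun i hi => exists_mem_inter_of_isClubIn hL hC hD hi⟩
  · obtain ⟨c, hc, h⟩ := h i hi
    exact ⟨c, hc.1, h⟩
  · obtain ⟨c, hc, h⟩ := h i hi
    exact ⟨c, hc.2, h⟩

end ClubIntersection

section Branches

variable {κ : Cardinal.{0}}

/-- Closure under initial segments. -/
def InitClosed (p : Set (BNode κ)) : Prop :=
  ∀ t ∈ p, ∀ s : BNode κ, s.Ext t → s ∈ p

/-- Closure under unions of increasing chains of length less than `κ`. -/
def ChainClosed (p : Set (BNode κ)) : Prop :=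
  ∀ η : Ordinal.{0}, η < κ.ord → ∀ f : Ordinal.{0} → BNode κ,
    (∀ α β, α < β → β < η → (f α).Ext (f β)) →
    (∀ α, α < η → f α ∈ p) →
    ∀ u : BNode κ, (∀ α, α < η → (f α).Ext u) →
      (∀ i, i < u.len → ∃ α, α < η ∧ i < (f α).len) → u ∈ p

open Classical in
/-- The leftmost branch of `p` through the node `s`. -/
def leftBranch (p : Set (BNode κ)) (s : BNode κ) : Ordinal.{0} → Bool :=
  (wellFounded_lt (α := Ordinal.{0})).fix fun i v =>
    if i < s.len then s.val i
    else decide (¬ ∃ t ∈ p, t.len = i + 1 ∧ t.val i = false ∧ ∀ j (hj : j < i), t.val j = v j hj)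

open Classical in
theorem leftBranch_eq (p : Set (BNode κ)) (s : BNode κ) (i : Ordinal.{0}) :
    leftBranch p s i = if i < s.len then s.val i
      else decide (¬ ∃ t ∈ p, t.len = i + 1 ∧ t.val i = false ∧
        ∀ j, j < i → t.val j = leftBranch p s j) :=
  WellFounded.fix_eq _ _ _

theorem restrict_leftBranch_mem (hκ : ℵ₀ ≤ κ) {p : Set (BNode κ)} (h₁ : InitClosed p)
    (h₂ : ChainClosed p) (h₃ : ∀ s ∈ p, ∃ b, s.snoc b ∈ p) {s : BNode κ} (hs : s ∈ p)
    (δ : Ordinal.{0}) (hδ : δ < κ.ord) : BNode.restrict (leftBranch p s) δ hδ ∈ p := by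
  classical
  induction δ using WellFoundedLT.induction with
  | ind δ ih =>
  rcases le_or_gt δ s.len with hle | hgt
  · refine h₁ s hs _ ⟨hle, fun i hi => ?_⟩
    rw [BNode.restrict_val_of_lt hδ hi, leftBranch_eq, if_pos (lt_of_lt_of_le hi hle)]
  rcases Ordinal.zero_or_succ_or_isSuccLimit δ with rfl | ⟨γ, rfl⟩ | hlim
  · exact absurd hgt not_lt_zero
  · have hγδ : γ < Order.succ γ := Order.lt_succ γ
    have hγ := ih γ hγδ (hγδ.trans hδ)
    have hsγ : ¬ γ < s.len := (Order.lt_succ_iff.1 hgt).not_gt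
    have hv := leftBranch_eq p s γ
    rw [if_neg hsγ] at hv
    -- any node of `p` of length `γ + 1` agreeing with the branch is its restriction
    have key : ∀ t ∈ p, t.len = γ + 1 → (∀ j, j < γ → t.val j = leftBranch p s j) →
        t.val γ = leftBranch p s γ → BNode.restrict (leftBranch p s) (Order.succ γ) hδ ∈ p := by
      intro t ht htl htj htγ
      convert ht using 1
      refine BNode.ext_of_len_val htl.symm fun i hi => ?_
      rw [BNode.restrict_val_of_lt hδ hi]
      rcases (Order.lt_succ_iff.1 hi).lt_or_eq with hi | rfl
      · exact (htj i hi).symm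
      · exact htγ.symm
    by_cases hex : ∃ t ∈ p, t.len = γ + 1 ∧ t.val γ = false ∧
        ∀ j, j < γ → t.val j = leftBranch p s j
    · rw [decide_eq_false (not_not.2 hex)] at hv
      obtain ⟨t, ht, htl, htγ, htj⟩ := hex
      exact key t ht htl htj (htγ.trans hv.symm)
    · rw [decide_eq_true hex] at hv
      obtain ⟨b, hb⟩ := h₃ _ hγ
      have hlen := BNode.snoc_len hκ (BNode.restrict (leftBranch p s) γ (hγδ.trans hδ)) b
      have hval : ∀ j, j < γ → ((BNode.restrict (leftBranch p s) γ (hγδ.trans hδ)).snoc b).val j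
          = leftBranch p s j := fun j hj =>
        (BNode.snoc_val_of_lt hκ _ b hj).trans (BNode.restrict_val_of_lt _ hj)
      have hlast := BNode.snoc_val_len hκ (BNode.restrict (leftBranch p s) γ (hγδ.trans hδ)) b
      cases b with
      | false => exact absurd ⟨_, hb, hlen, hlast, hval⟩ hex
      | true => exact key _ hb hlen hval (hlast.trans hv.symm)
  · have hmin : ∀ α, min α δ < κ.ord := fun α => (min_le_right _ _).trans_lt hδ
    refine h₂ δ hδ (fun α => BNode.restrict (leftBranch p s) (min α δ) (hmin α))
      (fun α β hαβ _ => BNode.restrict_ext_restrict _ _ _ (min_le_min_right _ hαβ.le))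
      (fun α hα => ?_) _
      (fun α _ => BNode.restrict_ext_restrict _ _ _ (min_le_right _ _)) fun i hi => ?_
    · exact ih _ (by rwa [min_eq_left hα.le]) _
    · exact ⟨Order.succ i, hlim.succ_lt hi, lt_min (Order.lt_succ i) hi⟩

/-- In a closed tree without terminal nodes, every node extends to every larger length. -/
theorem exists_ext_of_len (hκ : ℵ₀ ≤ κ) {p : Set (BNode κ)} (h₁ : InitClosed p)
    (h₂ : ChainClosed p) (h₃ : ∀ s ∈ p, ∃ b, s.snoc b ∈ p) {s : BNode κ} (hs : s ∈ p)
    {δ : Ordinal.{0}} (hδ : δ < κ.ord) (hsδ : s.len ≤ δ) :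
    ∃ t ∈ p, s.Ext t ∧ t.len = δ := by
  refine ⟨_, restrict_leftBranch_mem hκ h₁ h₂ h₃ hs δ hδ, ⟨hsδ, fun i hi => ?_⟩, rfl⟩
  rw [BNode.restrict_val_of_lt hδ (hi.trans_le hsδ), leftBranch_eq, if_pos hi]

end Branches

section Pruning

variable {κ : Cardinal.{0}}

/-- The nodes of `q` that turn left at every level in `E`. -/
def pruneTree (q : Set (BNode κ)) (E : Set Ordinal.{0}) : Set (BNode κ) :=
  {s ∈ q | ∀ i, i < s.len → i ∈ E → s.val i = false}

theorem IsPerfectTree.exists_snoc_mem (hκ : ℵ₀ ≤ κ) {q : Set (BNode κ)} (hq : IsPerfectTree q)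
    {s : BNode κ} (hs : s ∈ q) : ∃ b, s.snoc b ∈ q := by
  obtain ⟨t, ht, hst, htq⟩ := hq.2.2.1 s hs
  rcases hst.1.lt_or_eq with h | h
  · exact ⟨_, hq.1 t ht _ (BNode.snoc_ext_of_ext hκ hst h)⟩
  · have : s = t := BNode.ext_of_len_val h fun i hi => (hst.2 i hi).symm
    exact ⟨false, this ▸ htq.1⟩

theorem snoc_mem_pruneTree (hκ : ℵ₀ ≤ κ) {q : Set (BNode κ)} {E : Set Ordinal.{0}}
    {s : BNode κ} (hs : s ∈ pruneTree q E) {b : Bool} :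
    s.snoc b ∈ pruneTree q E ↔ s.snoc b ∈ q ∧ (s.len ∈ E → b = false) := by
  refine ⟨fun h => ⟨h.1, fun hE => ?_⟩, fun h => ⟨h.1, fun i hi hE => ?_⟩⟩
  · rw [← BNode.snoc_val_len hκ s b]
    exact h.2 _ (by rw [BNode.snoc_len hκ]; exact lt_add_one _) hE
  · rw [BNode.snoc_len hκ] at hi
    rcases (Order.lt_add_one_iff.1 hi).lt_or_eq with hi | rfl
    · rw [BNode.snoc_val_of_lt hκ s b hi]
      exact hs.2 i hi hE
    · rw [BNode.snoc_val_len hκ]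
      exact h.2 hE

theorem splits_pruneTree (hκ : ℵ₀ ≤ κ) {q : Set (BNode κ)} {E : Set Ordinal.{0}}
    {s : BNode κ} (hs : s ∈ pruneTree q E) :
    Splits (pruneTree q E) s ↔ Splits q s ∧ s.len ∉ E := by
  simp only [Splits, snoc_mem_pruneTree hκ hs]
  simp only [implies_true, and_true, Bool.true_eq_false, imp_false, and_assoc]

theorem IsSplitClub.pruneTree (hκ : ℵ₀ < κ.ord.cof) (hκ' : ℵ₀ ≤ κ) {q : Set (BNode κ)}
    {C D : Set Ordinal.{0}} (hD : IsSplitClub q D) (hC : IsClubIn κ.ord C) :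
    IsSplitClub (pruneTree q (D \ C)) (D ∩ C) := by
  refine ⟨hD.1.inter hκ hC, fun s hs => ?_⟩
  rw [splits_pruneTree hκ' hs, hD.2 s hs.1]
  simp only [mem_sdiff, mem_inter_iff]
  tauto

theorem IsPerfectTree.pruneTree (hκ : ℵ₀ < κ.ord.cof) (hκ' : ℵ₀ ≤ κ) {q : Set (BNode κ)}
    {C D : Set Ordinal.{0}} (hq : IsPerfectTree q) (hD : IsSplitClub q D)
    (hC : IsClubIn κ.ord C) : IsPerfectTree (pruneTree q (D \ C)) := by
  have hclub := hD.pruneTree hκ hκ' hC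
  have h₁ : InitClosed (_root_.pruneTree q (D \ C)) := fun t ht s hst =>
    ⟨hq.1 t ht.1 s hst, fun i hi hE => by
      rw [← hst.2 i hi]
      exact ht.2 i (hi.trans_le hst.1) hE⟩
  have h₂ : ChainClosed (_root_.pruneTree q (D \ C)) := fun η hη f hf hfp u hu hlen =>
    ⟨hq.2.1 η hη f hf (fun α hα => (hfp α hα).1) u hu hlen, fun i hi hE => by
      obtain ⟨α, hα, hiα⟩ := hlen i hi
      rw [(hu α hα).2 i hiα]
      exact (hfp α hα).2 i hiα hE⟩
  have h₃ : ∀ s ∈ _root_.pruneTree q (D \ C), ∃ b, s.snoc b ∈ _root_.pruneTree q (D \ C) := by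
    intro s hs
    by_cases hsD : s.len ∈ D
    · exact ⟨false, (snoc_mem_pruneTree hκ' hs).2 ⟨((hD.2 s hs.1).2 hsD).1, fun _ => rfl⟩⟩
    · obtain ⟨b, hb⟩ := hq.exists_snoc_mem hκ' hs.1
      exact ⟨b, (snoc_mem_pruneTree hκ' hs).2 ⟨hb, fun h => absurd h.1 hsD⟩⟩
  refine ⟨h₁, h₂, fun s hs => ?_, D ∩ C, hclub⟩
  obtain ⟨c, hc, hsc⟩ := hclub.1.2.2 s.len s.len_lt
  obtain ⟨t, ht, hst, rfl⟩ := exists_ext_of_len hκ' h₁ h₂ h₃ hs (hclub.1.1 c hc) hsc.le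
  exact ⟨t, ht, hst, (hclub.2 t ht).2 hc⟩

theorem IsSplitClub.splitClub_subset {p : Set (BNode κ)} {D : Set Ordinal.{0}}
    (hD : IsSplitClub p D) : splitClub p ⊆ D := by
  rintro _ ⟨s, hs, rfl, hsp⟩
  exact (hD.2 s hs).1 hsp

/-- Every perfect tree can be thinned so that its splitting levels lie in a given club. -/
theorem IsPerfectTree.exists_subset_splitClub_subset (hκ : ℵ₀ < κ.ord.cof) (hκ' : ℵ₀ ≤ κ)
    {q : Set (BNode κ)} (hq : IsPerfectTree q) {C : Set Ordinal.{0}} (hC : IsClubIn κ.ord C) :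
    ∃ p, IsPerfectTree p ∧ p ⊆ q ∧ splitClub p ⊆ C := by
  obtain ⟨D, hD⟩ := hq.2.2.2
  exact ⟨_, hq.pruneTree hκ hκ' hD hC, fun _ hs => hs.1,
    (hD.pruneTree hκ hκ' hC).splitClub_subset.trans inter_subset_right⟩

end Pruning

/-- For every club `C ⊆ κ` and every `S ⊆ λ` with `|S| ≤ κ`, the set
of conditions `p` in `Sacks(κ,λ)` such that `C(p ξ) ⊆ C` for every `ξ ∈ S` is dense. -/
theorem sacksProd_dense_splitClub (κ lam : Cardinal.{0}) (hκ : κ.IsInaccessible)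
    (C : Set Ordinal.{0}) (hC : IsClubIn κ.ord C)
    (S : Set Ordinal.{0}) (hS : S ⊆ Set.Iio lam.ord)
    (hScard : #S ≤ Cardinal.lift.{1} κ)
    (q : Ordinal.{0} → Set (BNode κ)) (hq : SacksCond κ lam q) :
    ∃ p, SacksCond κ lam p ∧ SacksLe lam p q ∧
      ∀ ξ ∈ S, splitClub (p ξ) ⊆ C := by
  have hκ' : ℵ₀ ≤ κ := hκ.isRegular.aleph0_le
  have hcof : ℵ₀ < κ.ord.cof := by
    rw [hκ.isRegular.cof_ord]
    exact hκ.aleph0_lt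
  classical
  have hthin : ∀ ξ, ξ < lam.ord →
      ∃ p, IsPerfectTree p ∧ p ⊆ q ξ ∧ splitClub p ⊆ C := fun ξ hξ =>
    (hq.1 ξ hξ).exists_subset_splitClub_subset hcof hκ' hC
  choose! r hr hrq hrC using hthin
  refine ⟨fun ξ => if ξ ∈ S then r ξ else q ξ, ⟨fun α hα => ?_, fun α hα => ?_, ?_⟩,
    fun α hα => ?_, fun ξ hξ => ?_⟩
  · dsimp only
    split_ifs
    exacts [hr α hα, hq.1 α hα]
  · dsimp only
    rw [if_neg fun h => hα (hS h)]
    exact hq.2.1 α hα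
  · have hsub : {α : Ordinal.{0} | α < lam.ord ∧ (if α ∈ S then r α else q α) ≠ Set.univ} ⊆
        S ∪ {α : Ordinal.{0} | α < lam.ord ∧ q α ≠ Set.univ} := by
      rintro α ⟨hα, hne⟩
      by_cases h : α ∈ S
      · exact Or.inl h
      · rw [if_neg h] at hne
        exact Or.inr ⟨hα, hne⟩
    exact (mk_le_mk_of_subset hsub).trans ((mk_union_le _ _).trans
      (add_le_of_le (aleph0_le_lift.2 hκ') hScard hq.2.2))
  · dsimp only
    split_ifs
    exacts [hrq α hα, subset_rfl]
  · dsimp only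
    rw [if_pos hξ]
    exact hrC ξ (hS hξ)
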